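/- arXiv:1610.06731 — 4 statements merged into one kernel-verified Lean document; each statement's English description precedes it below -/
import Mathlib

section
/- Let d ≥ 1, h > 0, κ a positive integer, ρ ∈ ℝ, and L_f, L_g > 0. Then inf over pairs of measurable kernels (K̂_f, K̂_g) of the supremum over F ∈ 𝓕(L_f, 𝟏) and G ∈ 𝓕(L_g, 𝟏) of [ Φ_{hI}(G, K̂_g) + ρ² Φ_{(h/κ)I}(F, K̂_f) ] equals ρ² (L_f/2) (h/(κπ))² + (L_g/2) (h/π)². -/
open MeasureTheory Real

/-- The interpolation-error functional
`Φ_H(F, K̂) = ∫_{ℝ^d} F(ω) [(1 − K̂(ω))² + ∑_{k ∈ ℤ^d, k ≠ 0} K̂(ω + H⁻¹k)²] dω`,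
where `H = diag(h₁,…,h_d)` and the inner sum is a (possibly infinite) sum of
nonnegative terms, so the value is taken in `ℝ≥0∞`. -/
noncomputable def Phi (d : ℕ) (h : Fin d → ℝ) (F : (Fin d → ℝ) → ℝ)
    (K : (Fin d → ℝ) → ℝ) : ENNReal :=
  ∫⁻ ω : Fin d → ℝ, ENNReal.ofReal (F ω) *
    (ENNReal.ofReal ((1 - K ω) ^ 2) +
      ∑' k : {k : Fin d → ℤ // k ≠ 0},
        ENNReal.ofReal ((K (ω + fun i => (k.1 i : ℝ) / h i)) ^ 2))

/-- The smoothness class `𝓕(L, λ)` of spectral densities: measurable, integrable,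
nonnegative `F` with `(2π)² ∫ F(ω) ∑ᵢ λᵢ² ωᵢ² dω ≤ L`. -/
def SpecClass (d : ℕ) (L : ℝ) (lam : Fin d → ℝ) : Set ((Fin d → ℝ) → ℝ) :=
  {F | Measurable F ∧ Integrable F ∧ (∀ ω, 0 ≤ F ω) ∧
    ENNReal.ofReal ((2 * π) ^ 2) *
      ∫⁻ ω : Fin d → ℝ, ENNReal.ofReal (F ω * ∑ i, (lam i) ^ 2 * (ω i) ^ 2)
        ≤ ENNReal.ofReal L}


namespace VFM

/-- twice the distance to the nearest integer, coordinatewise -/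
noncomputable def wf {d : ℕ} (t : Fin d → ℝ) (i : Fin d) : ℝ := 2 * |t i - round (t i)|

noncomputable def qf {d : ℕ} (w : Fin d → ℝ) : ℝ :=
  ⨆ p : Fin d × Fin d, if p.1 = p.2 then w p.1 / 2 else w p.1 + w p.2 - 1

noncomputable def Kr {d : ℕ} (t : Fin d → ℝ) : ℝ :=
  max 0 (1 - qf (wf t) + ∑ i, (wf t i / 2) ^ 2 - ∑ i, t i ^ 2)

lemma measurable_wf {d : ℕ} (i : Fin d) : Measurable (fun t : Fin d → ℝ => wf t i) := by
  unfold wf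
  have hr : Measurable (fun x : ℝ => ((round x : ℤ) : ℝ)) := by
    simp only [round_eq]
    have : Measurable (fun x : ℝ => ⌊x + 1/2⌋) :=
      Int.measurable_floor.comp (measurable_id.add_const _)
    exact (measurable_of_countable (fun n : ℤ => (n : ℝ))).comp this
  have h1 : Measurable (fun t : Fin d → ℝ => t i - (round (t i) : ℤ)) :=
    (measurable_pi_apply i).sub (hr.comp (measurable_pi_apply i))
  have h2 : Measurable (fun t : Fin d → ℝ => |t i - (round (t i) : ℤ)|) := h1.abs
  exact h2.const_mul 2

lemma measurable_qf {d : ℕ} : Measurable (fun t : Fin d → ℝ => qf (wf t)) := by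
  unfold qf
  apply Measurable.iSup
  intro p
  split_ifs
  · exact (measurable_wf _).div_const _
  · exact ((measurable_wf _).add (measurable_wf _)).sub_const _

lemma measurable_Kr {d : ℕ} : Measurable (Kr : (Fin d → ℝ) → ℝ) := by
  unfold Kr
  apply Measurable.max measurable_const
  apply Measurable.sub
  · apply Measurable.add
    · exact measurable_const.sub measurable_qf
    · exact Finset.measurable_sum _ (fun i _ => ((measurable_wf i).div_const _).pow_const _)
  · exact Finset.measurable_sum _ (fun i _ => (measurable_pi_apply i).pow_const _)

lemma wf_nonneg {d : ℕ} (t : Fin d → ℝ) (i : Fin d) : 0 ≤ wf t i := by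
  unfold wf; positivity

lemma wf_le_one {d : ℕ} (t : Fin d → ℝ) (i : Fin d) : wf t i ≤ 1 := by
  unfold wf; have := abs_sub_round (t i); linarith

lemma le_qf {d : ℕ} (w : Fin d → ℝ) (p : Fin d × Fin d) :
    (if p.1 = p.2 then w p.1 / 2 else w p.1 + w p.2 - 1) ≤ qf w := by
  unfold qf
  exact le_ciSup (f := fun p : Fin d × Fin d => if p.1 = p.2 then w p.1 / 2 else w p.1 + w p.2 - 1)
    (Set.finite_range _).bddAbove p

lemma le_two_qf {d : ℕ} (w : Fin d → ℝ) (i : Fin d) : w i ≤ 2 * qf w := by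
  have := le_qf w (i, i)
  simp at this; linarith

lemma add_le_qf {d : ℕ} (w : Fin d → ℝ) {i j : Fin d} (hij : i ≠ j) : w i + w j ≤ 1 + qf w := by
  have := le_qf w (i, j)
  simp [hij] at this; linarith

lemma key {d : ℕ} (hd : 1 ≤ d) (w : Fin d → ℝ) (h0 : ∀ i, 0 ≤ w i) (h1 : ∀ i, w i ≤ 1) :
    qf w ^ 2 + ∑ i, (max 0 (w i - qf w)) ^ 2 ≤ ∑ i, (w i) ^ 2 / 2 := by
  classical
  have : Nonempty (Fin d) := ⟨⟨0, hd⟩⟩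
  obtain ⟨⟨i, j⟩, hp⟩ := exists_eq_ciSup_of_finite
    (f := fun p : Fin d × Fin d => if p.1 = p.2 then w p.1 / 2 else w p.1 + w p.2 - 1)
  change _ = qf w at hp
  have hA := le_two_qf w
  have hB : ∀ {i j : Fin d}, i ≠ j → w i + w j ≤ 1 + qf w := fun h => add_le_qf w h
  generalize qf w = q at *
  have hle : ∀ i, (max 0 (w i - q)) ^ 2 ≤ w i ^ 2 / 2 := by
    intro i
    have : max 0 (w i - q) ≤ w i / 2 := max_le (by linarith [h0 i]) (by linarith [hA i])
    have h2 : 0 ≤ max 0 (w i - q) := le_max_left _ _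
    nlinarith [h0 i]
  by_cases hij : i = j
  · subst hij
    simp at hp
    rw [← Finset.add_sum_erase _ _ (Finset.mem_univ i), ← Finset.add_sum_erase (a := i) _ (fun i => (w i) ^ 2 / 2) (Finset.mem_univ i)]
    have := Finset.sum_le_sum (s := Finset.univ.erase i) (fun i _ => hle i)
    have h3 : max 0 (w i - q) = q := by
      rw [max_eq_right] <;> linarith [h0 i]
    rw [h3]
    have : w i = 2 * q := by linarith
    rw [this]
    nlinarith
  · simp [hij] at hp
    have hj : j ∈ Finset.univ.erase i := by simp [Ne.symm hij]
    rw [← Finset.add_sum_erase _ _ (Finset.mem_univ i), ← Finset.add_sum_erase (a := i) _ (fun i => (w i) ^ 2 / 2) (Finset.mem_univ i), ← Finset.add_sum_erase _ _ hj, ← Finset.add_sum_erase (a := j) _ (fun i => (w i) ^ 2 / 2) hj]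
    have := Finset.sum_le_sum (s := (Finset.univ.erase i).erase j) (fun i _ => hle i)
    have e1 : max 0 (w i - q) = 1 - w j := by rw [max_eq_right] <;> linarith [h1 j]
    have e2 : max 0 (w j - q) = 1 - w i := by rw [max_eq_right] <;> linarith [h1 i]
    rw [e1, e2]
    have := hA i
    have := hA j
    have a1 := h1 i
    have a2 := h1 j
    obtain ⟨a, ha⟩ : ∃ a, a = 1 - w i := ⟨_, rfl⟩
    obtain ⟨b, hb⟩ : ∃ b, b = 1 - w j := ⟨_, rfl⟩
    have hi : w i = 1 - a := by linarith
    have hj' : w j = 1 - b := by linarith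
    have hq : q = 1 - a - b := by linarith
    clear hp e1 e2 hle hA hB h0 h1
    subst hq
    rw [hi, hj'] at *
    have hab : 0 ≤ a * b := mul_nonneg (by linarith) (by linarith)
    have hs : 0 ≤ (a + b) * (2/3 - (a + b)) := mul_nonneg (by linarith) (by linarith)
    nlinarith

lemma wf_add_int {d : ℕ} (t : Fin d → ℝ) (k : Fin d → ℤ) :
    wf (t + fun i => (k i : ℝ)) = wf t := by
  funext i
  simp [wf, round_add_intCast]

/-- the special lattice points where the kernel may be nonzero -/
noncomputable def pt {d : ℕ} (t : Fin d → ℝ) : Option (Fin d) → (Fin d → ℤ)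
  | none => fun i => - round (t i)
  | some j => fun i => - round (t i) +
      (if i = j then (if 0 ≤ t j - round (t j) then -1 else 1) else 0)

noncomputable def vl {d : ℕ} (t : Fin d → ℝ) : Option (Fin d) → ℝ
  | none => (1 - qf (wf t)) ^ 2
  | some j => (max 0 (wf t j - qf (wf t))) ^ 2

lemma Kr_cases {d : ℕ} (hd : 1 ≤ d) (t : Fin d → ℝ) (k : Fin d → ℤ) :
    Kr (t + fun i => (k i : ℝ)) = 0 ∨
      ∃ o, k = pt t o ∧ Kr (t + fun i => (k i : ℝ)) ^ 2 ≤ vl t o := by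
  classical
  have hw0 := wf_nonneg t
  have hw1 := wf_le_one t
  have hA := le_two_qf (wf t)
  have hB : ∀ {i j : Fin d}, i ≠ j → wf t i + wf t j ≤ 1 + qf (wf t) := fun h => add_le_qf _ h
  have hq0 : 0 ≤ qf (wf t) := by linarith [hA ⟨0, hd⟩, hw0 ⟨0, hd⟩]
  have hq1 : qf (wf t) ≤ 1 := by
    have : Nonempty (Fin d) := ⟨⟨0, hd⟩⟩
    apply ciSup_le
    intro p
    split_ifs
    · linarith [hw1 p.1]
    · linarith [hw1 p.1, hw1 p.2]
  obtain ⟨m, hm⟩ : ∃ m : Fin d → ℤ, ∀ i, m i = k i + round (t i) := ⟨_, fun i => rfl⟩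
  obtain ⟨y, hy⟩ : ∃ y : Fin d → ℝ, ∀ i, y i = t i - round (t i) := ⟨_, fun i => rfl⟩
  have hwy : ∀ i, wf t i = 2 * |y i| := fun i => by rw [hy]; rfl
  have hK : Kr (t + fun i => (k i : ℝ)) =
      max 0 (1 - qf (wf t) - ∑ i, ((m i : ℝ) ^ 2 + 2 * m i * y i)) := by
    unfold Kr
    rw [wf_add_int]
    congr 1
    rw [add_sub_assoc, ← Finset.sum_sub_distrib, sub_eq_add_neg _ (∑ i, _), ← Finset.sum_neg_distrib]
    congr 1
    apply Finset.sum_congr rfl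
    intro i _
    have e : (m i : ℝ) = k i + round (t i) := by rw [hm]; push_cast; ring
    have e2 : t i = y i + round (t i) := by rw [hy]; ring
    rw [hwy, e]
    simp only [Pi.add_apply]
    have : (2 * |y i| / 2) ^ 2 = y i ^ 2 := by
      rw [mul_div_cancel_left₀ _ (by norm_num : (2:ℝ) ≠ 0), sq_abs]
    rw [this, hy]
    ring
  -- each summand
  have hs0 : ∀ i, m i ≠ 0 → 1 - wf t i ≤ (m i : ℝ) ^ 2 + 2 * m i * y i := by
    intro i hi
    rw [hwy]
    have h1 : (1:ℝ) ≤ |(m i : ℝ)| := by exact_mod_cast Int.one_le_abs hi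
    have h2 : -(|(m i : ℝ)| * |y i|) ≤ m i * y i := by rw [← abs_mul]; exact neg_abs_le _
    have h3 := sq_abs (m i : ℝ)
    have h4 : 2 * |y i| ≤ 1 := by rw [← hwy]; exact hw1 i
    nlinarith [abs_nonneg (y i)]
  have hs : ∀ i, 0 ≤ (m i : ℝ) ^ 2 + 2 * m i * y i := by
    intro i
    by_cases hi : m i = 0
    · simp [hi]
    · linarith [hs0 i hi, hw1 i]
  by_cases hz : ∀ i, m i = 0
  · right
    refine ⟨none, ?_, ?_⟩
    · funext i
      have := hm i
      rw [hz i] at this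
      simp [pt]; linarith
    · rw [hK]
      simp [hz, vl]
      rw [max_eq_right (by linarith)]
  push Not at hz
  obtain ⟨i, hi⟩ := hz
  by_cases hj : ∃ j, j ≠ i ∧ m j ≠ 0
  · left
    obtain ⟨j, hji, hj⟩ := hj
    rw [hK, max_eq_left]
    have hle : ∑ a ∈ {i, j}, ((m a : ℝ) ^ 2 + 2 * m a * y a) ≤ ∑ a, ((m a : ℝ) ^ 2 + 2 * m a * y a) :=
      Finset.sum_le_sum_of_subset_of_nonneg (Finset.subset_univ _) (fun a _ _ => hs a)
    rw [Finset.sum_pair hji.symm] at hle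
    linarith [hs0 i hi, hs0 j hj, hB hji]
  push Not at hj
  have hsum : ∑ a, ((m a : ℝ) ^ 2 + 2 * m a * y a) = (m i : ℝ) ^ 2 + 2 * m i * y i := by
    apply Finset.sum_eq_single_of_mem _ (Finset.mem_univ i)
    intro b _ hb
    simp [hj b hb]
  rw [hsum] at hK
  by_cases hσ : m i = (if 0 ≤ t i - round (t i) then -1 else 1)
  · right
    refine ⟨some i, ?_, ?_⟩
    · funext a
      have := hm a
      simp only [pt]
      by_cases ha : a = i
      · subst ha; rw [if_pos rfl, ← hσ]; linarith
      · rw [if_neg ha]; rw [hj a ha] at this; linarith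
    · rw [hK]
      simp only [vl]
      apply le_of_eq
      congr 2
      have := hwy i
      rw [← hy] at hσ
      split_ifs at hσ with hc
      · rw [hσ, this, abs_of_nonneg hc]; push_cast; ring
      · rw [hσ, this, abs_of_neg (by linarith)]; push_cast; ring
  · left
    rw [hK, max_eq_left]
    have : (1:ℝ) ≤ (m i : ℝ) ^ 2 + 2 * m i * y i := by
      rw [← hy] at hσ
      have h4 : 2 * |y i| ≤ 1 := by rw [← hwy]; exact hw1 i
      have h5 := abs_le.1 (show |y i| ≤ 1/2 by linarith)
      split_ifs at hσ with hc
      · rcases lt_or_gt_of_ne hi with h | h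
        · have : m i ≤ -2 := by omega
          have : (m i : ℝ) ≤ -2 := by exact_mod_cast this
          nlinarith
        · have : (1:ℝ) ≤ (m i : ℝ) := by exact_mod_cast h
          nlinarith
      · rcases lt_or_gt_of_ne hi with h | h
        · have : m i ≤ -1 := by omega
          have : (m i : ℝ) ≤ -1 := by exact_mod_cast this
          nlinarith
        · have : 2 ≤ m i := by omega
          have : (2:ℝ) ≤ (m i : ℝ) := by exact_mod_cast this
          nlinarith
    linarith

lemma tsum_Kr {d : ℕ} (hd : 1 ≤ d) (t : Fin d → ℝ) :
    ∑' k : Fin d → ℤ, ENNReal.ofReal (Kr (t + fun i => (k i : ℝ)) ^ 2) ≤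
      ENNReal.ofReal (1 - 2 * qf (wf t) + 2 * ∑ i, (wf t i / 2) ^ 2) := by
  classical
  have h1 : ∀ k : Fin d → ℤ, ENNReal.ofReal (Kr (t + fun i => (k i : ℝ)) ^ 2) ≤
      ∑ o : Option (Fin d), if k = pt t o then ENNReal.ofReal (vl t o) else 0 := by
    intro k
    rcases Kr_cases hd t k with h | ⟨o, ho, hle⟩
    · simp [h]
    · calc _ ≤ ENNReal.ofReal (vl t o) := ENNReal.ofReal_le_ofReal hle
        _ = if k = pt t o then ENNReal.ofReal (vl t o) else 0 := by rw [if_pos ho]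
        _ ≤ _ := Finset.single_le_sum (f := fun o => if k = pt t o then ENNReal.ofReal (vl t o) else 0)
            (fun _ _ => zero_le) (Finset.mem_univ o)
  refine (ENNReal.tsum_le_tsum h1).trans ?_
  rw [Summable.tsum_finsetSum (fun _ _ => ENNReal.summable)]
  simp only [tsum_ite_eq]
  have hv : ∀ o, 0 ≤ vl t o := by
    intro o; cases o <;> simp only [vl] <;> positivity
  rw [← ENNReal.ofReal_sum_of_nonneg (fun o _ => hv o)]
  apply ENNReal.ofReal_le_ofReal
  rw [Fintype.sum_option]
  simp only [vl]
  have := key hd (wf t) (wf_nonneg t) (wf_le_one t)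
  have e : 2 * ∑ i, (wf t i / 2) ^ 2 = ∑ i, (wf t i) ^ 2 / 2 := by
    rw [Finset.mul_sum]; apply Finset.sum_congr rfl; intros; ring
  rw [e]
  nlinarith

lemma A_le {d : ℕ} (hd : 1 ≤ d) (t : Fin d → ℝ) :
    ENNReal.ofReal ((1 - Kr t) ^ 2) + ∑' k : {k : Fin d → ℤ // k ≠ 0},
      ENNReal.ofReal (Kr (t + fun i => (k.1 i : ℝ)) ^ 2) ≤ ENNReal.ofReal (2 * ∑ i, t i ^ 2) := by
  have h := tsum_Kr hd t
  have hsplit : ENNReal.ofReal (Kr t ^ 2) + ∑' k : {k : Fin d → ℤ // k ≠ 0},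
      ENNReal.ofReal (Kr (t + fun i => (k.1 i : ℝ)) ^ 2) =
      ∑' k : Fin d → ℤ, ENNReal.ofReal (Kr (t + fun i => (k i : ℝ)) ^ 2) := by
    have := ENNReal.summable.tsum_add_tsum_compl (s := {(0 : Fin d → ℤ)}) (ENNReal.summable)
      (f := fun k : Fin d → ℤ => ENNReal.ofReal (Kr (t + fun i => (k i : ℝ)) ^ 2))
    rw [← this]
    congr 1
    rw [tsum_singleton (0 : Fin d → ℤ) (fun k : Fin d → ℤ => ENNReal.ofReal (Kr (t + fun i => (k i : ℝ)) ^ 2))]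
    congr 3
    funext i
    simp
  rw [← hsplit] at h
  set s := ∑' k : {k : Fin d → ℤ // k ≠ 0}, ENNReal.ofReal (Kr (t + fun i => (k.1 i : ℝ)) ^ 2) with hs
  have hfin : s ≠ ⊤ := by
    intro hs; rw [hs] at h; simp at h
  have hQ : 0 ≤ 1 - 2 * qf (wf t) + 2 * ∑ i, (wf t i / 2) ^ 2 := by
    have := key hd (wf t) (wf_nonneg t) (wf_le_one t)
    have e : 2 * ∑ i, (wf t i / 2) ^ 2 = ∑ i, (wf t i) ^ 2 / 2 := by
      rw [Finset.mul_sum]; apply Finset.sum_congr rfl; intros; ring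
    have h0 : 0 ≤ ∑ i, (max 0 (wf t i - qf (wf t))) ^ 2 := Finset.sum_nonneg (fun _ _ => sq_nonneg _)
    rw [e]
    nlinarith [sq_nonneg (1 - qf (wf t))]
  rw [← ENNReal.ofReal_toReal hfin, ← ENNReal.ofReal_add (sq_nonneg _) ENNReal.toReal_nonneg] at h ⊢
  rw [ENNReal.ofReal_le_ofReal_iff hQ] at h
  apply ENNReal.ofReal_le_ofReal
  have hk : 1 - qf (wf t) + ∑ i, (wf t i / 2) ^ 2 - ∑ i, t i ^ 2 ≤ Kr t := le_max_right _ _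
  nlinarith

lemma Phi_upper (d : ℕ) (hd : 1 ≤ d) (h : ℝ) (hh : 0 < h) (L : ℝ)
    (F : (Fin d → ℝ) → ℝ) (hF : F ∈ SpecClass d L (fun _ => 1)) :
    Phi d (fun _ => h) F (fun ω => Kr (h • ω)) ≤ ENNReal.ofReal ((L / 2) * (h / π) ^ 2) := by
  obtain ⟨hFm, -, hF0, hFL⟩ := hF
  have h1 : Phi d (fun _ => h) F (fun ω => Kr (h • ω)) ≤
      ∫⁻ ω : Fin d → ℝ, ENNReal.ofReal (2 * h ^ 2) *
        ENNReal.ofReal (F ω * ∑ i, (1:ℝ) ^ 2 * (ω i) ^ 2) := by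
    unfold Phi
    apply lintegral_mono
    intro ω
    have hA := A_le hd (h • ω)
    have e : ∀ k : {k : Fin d → ℤ // k ≠ 0}, h • (ω + fun i => (k.1 i : ℝ) / h) =
        h • ω + fun i => (k.1 i : ℝ) := by
      intro k; funext i; simp; field_simp
    simp only [e]
    refine (mul_le_mul_right hA _).trans (le_of_eq ?_)
    rw [← ENNReal.ofReal_mul (hF0 ω), ← ENNReal.ofReal_mul (by positivity)]
    congr 1
    simp only [Pi.smul_apply, smul_eq_mul, mul_pow, ← Finset.mul_sum]
    ring
  refine h1.trans ?_
  rw [lintegral_const_mul' _ _ ENNReal.ofReal_ne_top]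
  have e2 : ENNReal.ofReal (2 * h ^ 2) = ENNReal.ofReal (2 * h ^ 2 / (2 * π) ^ 2) * ENNReal.ofReal ((2 * π) ^ 2) := by
    rw [← ENNReal.ofReal_mul (by positivity)]
    congr 1
    field_simp
  rw [e2, mul_assoc]
  refine (mul_le_mul_right hFL _).trans (le_of_eq ?_)
  rw [← ENNReal.ofReal_mul (by positivity)]
  congr 1
  field_simp

end VFM

namespace VFM

noncomputable def Fb {d : ℕ} (C : ℝ) (e : Fin d → ℝ) (B : Set (Fin d → ℝ)) (ω : Fin d → ℝ) : ℝ :=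
  C * (B.indicator 1 ω + B.indicator 1 (ω + e))

lemma measurable_Fb {d : ℕ} (C : ℝ) (e : Fin d → ℝ) (B : Set (Fin d → ℝ)) (hB : MeasurableSet B) :
    Measurable (Fb C e B) := by
  unfold Fb
  have h1 : Measurable (B.indicator (1 : (Fin d → ℝ) → ℝ)) := measurable_one.indicator hB
  exact (h1.add (h1.comp (measurable_id.add_const e))).const_mul C

lemma Fb_nonneg {d : ℕ} {C : ℝ} (hC : 0 ≤ C) (e : Fin d → ℝ) (B : Set (Fin d → ℝ)) (ω : Fin d → ℝ) :
    0 ≤ Fb C e B ω := by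
  unfold Fb
  have h1 : ∀ x, 0 ≤ B.indicator (1 : (Fin d → ℝ) → ℝ) x :=
    fun x => Set.indicator_nonneg (fun _ _ => zero_le_one) x
  exact mul_nonneg hC (add_nonneg (h1 _) (h1 _))

lemma lint_Fb {d : ℕ} {C : ℝ} (hC : 0 ≤ C) (e : Fin d → ℝ) (B : Set (Fin d → ℝ))
    (hB : MeasurableSet B) (X : (Fin d → ℝ) → ENNReal) (hX : Measurable X) :
    ∫⁻ ω, ENNReal.ofReal (Fb C e B ω) * X ω =
      ENNReal.ofReal C * ∫⁻ ω in B, (X ω + X (ω - e)) := by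
  have h1 : ∀ x, ENNReal.ofReal (B.indicator (1 : (Fin d → ℝ) → ℝ) x) = B.indicator 1 x := by
    intro x
    by_cases hx : x ∈ B <;> simp [hx]
  have h0 : ∀ x, 0 ≤ B.indicator (1 : (Fin d → ℝ) → ℝ) x :=
    fun x => Set.indicator_nonneg (fun _ _ => zero_le_one) x
  have h2 : ∀ ω, ENNReal.ofReal (Fb C e B ω) * X ω =
      ENNReal.ofReal C * (B.indicator X ω + B.indicator (fun ω => X (ω - e)) (ω + e)) := by
    intro ω
    unfold Fb
    rw [ENNReal.ofReal_mul hC, ENNReal.ofReal_add (h0 _) (h0 _), h1, h1, mul_assoc, add_mul]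
    congr 2
    · by_cases hx : ω ∈ B <;> simp [hx]
    · by_cases hx : ω + e ∈ B <;> simp [hx]
  simp only [h2]
  have hX' : Measurable (fun ω => X (ω - e)) := hX.comp (measurable_id.sub_const e)
  rw [lintegral_const_mul' _ _ ENNReal.ofReal_ne_top, lintegral_add_left (hX.indicator hB),
    lintegral_add_right_eq_self (fun ω => B.indicator (fun ω => X (ω - e)) ω) e,
    lintegral_indicator hB, lintegral_indicator hB, lintegral_add_left hX]

lemma Phi_lower (d : ℕ) (hd : 1 ≤ d) (h : ℝ) (hh : 0 < h) (L : ℝ) (hL : 0 < L) (δ : ℝ) (hδ : 0 < δ) :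
    ∃ F ∈ SpecClass d L (fun _ => 1), ∀ K : (Fin d → ℝ) → ℝ, Measurable K →
      ENNReal.ofReal (L / (2 * (2 * π) ^ 2 * ((1 / (2 * h) + δ) ^ 2 + d * δ ^ 2)))
        ≤ Phi d (fun _ => h) F K := by
  obtain ⟨i0⟩ : Nonempty (Fin d) := ⟨⟨0, hd⟩⟩
  set e : Fin d → ℝ := Pi.single i0 (1 / h) with he
  set c : Fin d → ℝ := Pi.single i0 (1 / (2 * h)) with hc
  set B := Metric.ball c δ with hBdef
  have hB : MeasurableSet B := measurableSet_ball
  have hVt : volume B ≠ ⊤ := Metric.isBounded_ball.measure_lt_top.ne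
  have hV0 : volume B ≠ 0 := (Metric.measure_ball_pos volume c hδ).ne'
  set V := (volume B).toReal with hV
  have hVpos : 0 < V := ENNReal.toReal_pos hV0 hVt
  have hVe : volume B = ENNReal.ofReal V := (ENNReal.ofReal_toReal hVt).symm
  set R := (1 / (2 * h) + δ) ^ 2 + d * δ ^ 2 with hR
  have hRpos : 0 < R := by positivity
  set C := L / (2 * (2 * π) ^ 2 * R * V) with hCdef
  have hC : 0 < C := by positivity
  have hnorm : ∀ x : Fin d → ℝ, (∀ i, i ≠ i0 → |x i| ≤ δ) → |x i0| ≤ 1 / (2 * h) + δ →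
      ∑ i, (1:ℝ) ^ 2 * (x i) ^ 2 ≤ R := by
    intro x hx hx0
    have : ∀ i, (1:ℝ) ^ 2 * (x i) ^ 2 ≤ (if i = i0 then (1 / (2 * h) + δ) ^ 2 else 0) + δ ^ 2 := by
      intro i
      rw [one_pow, one_mul, ← sq_abs]
      split_ifs with hi
      · subst hi
        nlinarith [abs_nonneg (x i)]
      · have := hx i hi
        nlinarith [abs_nonneg (x i)]
    refine (Finset.sum_le_sum (fun i _ => this i)).trans (le_of_eq ?_)
    rw [Finset.sum_add_distrib]
    simp [hR]
  have hball : ∀ x ∈ B, ∀ i, |x i - c i| ≤ δ := by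
    intro x hx i
    have h1 : dist (x i) (c i) ≤ dist x c := dist_le_pi_dist x c i
    rw [Real.dist_eq] at h1
    exact h1.trans (Metric.mem_ball.1 hx).le
  have hhalf : 1 / h = 1 / (2 * h) + 1 / (2 * h) := by field_simp; norm_num
  have hpos2 : 0 < 1 / (2 * h) := by positivity
  have hn1 : ∀ x ∈ B, ∑ i, (1:ℝ) ^ 2 * (x i) ^ 2 ≤ R := by
    intro x hx
    apply hnorm
    · intro i hi
      have := hball x hx i
      simpa [hc, hi] using this
    · have := abs_le.1 (hball x hx i0)
      simp only [hc, Pi.single_eq_same] at this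
      rw [abs_le]; constructor <;> linarith
  have hn2 : ∀ x ∈ B, ∑ i, (1:ℝ) ^ 2 * ((x - e) i) ^ 2 ≤ R := by
    intro x hx
    apply hnorm
    · intro i hi
      have := hball x hx i
      simpa [hc, he, hi] using this
    · have := abs_le.1 (hball x hx i0)
      simp only [hc, Pi.single_eq_same] at this
      simp only [he, Pi.sub_apply, Pi.single_eq_same]
      rw [abs_le]; constructor <;> linarith
  have hFm := measurable_Fb C e B hB
  have hF0 := Fb_nonneg hC.le e B
  refine ⟨Fb C e B, ⟨hFm, ⟨hFm.aestronglyMeasurable, ?_⟩, hF0, ?_⟩, ?_⟩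
  · rw [hasFiniteIntegral_iff_ofReal (Filter.Eventually.of_forall hF0)]
    have := lint_Fb hC.le e B hB (fun _ => 1) measurable_const
    simp only [mul_one] at this
    rw [this, setLIntegral_const]
    exact ENNReal.mul_lt_top ENNReal.ofReal_lt_top (ENNReal.mul_lt_top (by simp) hVt.lt_top)
  · have hX : Measurable (fun ω : Fin d → ℝ => ENNReal.ofReal (∑ i, (1:ℝ) ^ 2 * (ω i) ^ 2)) :=
      (Finset.measurable_sum _ (fun i _ => ((measurable_pi_apply i).pow_const 2).const_mul _)).ennreal_ofReal
    have := lint_Fb hC.le e B hB _ hX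
    simp only [← ENNReal.ofReal_mul (hF0 _)] at this
    rw [this]
    have hle : ∫⁻ ω in B, (ENNReal.ofReal (∑ i, (1:ℝ) ^ 2 * (ω i) ^ 2) +
        ENNReal.ofReal (∑ i, (1:ℝ) ^ 2 * ((ω - e) i) ^ 2)) ≤ ∫⁻ ω in B, ENNReal.ofReal (2 * R) := by
      apply setLIntegral_mono' hB
      intro x hx
      rw [two_mul, ENNReal.ofReal_add hRpos.le hRpos.le]
      exact add_le_add (ENNReal.ofReal_le_ofReal (hn1 x hx)) (ENNReal.ofReal_le_ofReal (hn2 x hx))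
    rw [setLIntegral_const, hVe, ← ENNReal.ofReal_mul (by positivity)] at hle
    refine (mul_le_mul_right (mul_le_mul_right hle _) _).trans (le_of_eq ?_)
    rw [← ENNReal.ofReal_mul hC.le, ← ENNReal.ofReal_mul (by positivity)]
    congr 1
    rw [hCdef]
    field_simp
  · intro K hK
    unfold Phi
    have hmeas : Measurable (fun ω : Fin d → ℝ => ENNReal.ofReal ((1 - K ω) ^ 2) +
      ∑' k : {k : Fin d → ℤ // k ≠ 0},
        ENNReal.ofReal ((K (ω + fun i => (k.1 i : ℝ) / h)) ^ 2)) := by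
      refine Measurable.fun_add ?_ ?_
      · exact ((measurable_const.sub hK).pow_const 2).ennreal_ofReal
      · apply Measurable.ennreal_tsum
        intro k
        exact ((hK.comp (measurable_id.add_const _)).pow_const 2).ennreal_ofReal
    rw [lint_Fb hC.le e B hB _ hmeas]
    have hone : ∫⁻ ω in B, 1 ≤ ∫⁻ ω in B, ((ENNReal.ofReal ((1 - K ω) ^ 2) +
      ∑' k : {k : Fin d → ℤ // k ≠ 0},
        ENNReal.ofReal ((K (ω + fun i => (k.1 i : ℝ) / h)) ^ 2)) +
        (ENNReal.ofReal ((1 - K (ω - e)) ^ 2) +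
      ∑' k : {k : Fin d → ℤ // k ≠ 0},
        ENNReal.ofReal ((K (ω - e + fun i => (k.1 i : ℝ) / h)) ^ 2))) := by
      apply lintegral_mono
      intro ω
      have k1 : (Pi.single i0 (1:ℤ) : Fin d → ℤ) ≠ 0 := by simp
      have k2 : (Pi.single i0 (-1:ℤ) : Fin d → ℤ) ≠ 0 := by simp
      have t1 : ENNReal.ofReal (K (ω - e) ^ 2) ≤ ∑' k : {k : Fin d → ℤ // k ≠ 0},
          ENNReal.ofReal ((K (ω + fun i => (k.1 i : ℝ) / h)) ^ 2) := by
        refine le_trans (le_of_eq ?_) (ENNReal.le_tsum ⟨_, k2⟩)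
        congr 3
        funext i
        by_cases hi : i = i0
        · subst hi; simp [he]; ring
        · simp [he, hi]
      have t2 : ENNReal.ofReal (K ω ^ 2) ≤ ∑' k : {k : Fin d → ℤ // k ≠ 0},
          ENNReal.ofReal ((K (ω - e + fun i => (k.1 i : ℝ) / h)) ^ 2) := by
        refine le_trans (le_of_eq ?_) (ENNReal.le_tsum ⟨_, k1⟩)
        congr 3
        funext i
        by_cases hi : i = i0
        · subst hi; simp [he]
        · simp [he, hi]
      refine le_trans ?_ (add_le_add (add_le_add le_rfl t1) (add_le_add le_rfl t2))
      rw [← ENNReal.ofReal_add (by positivity) (by positivity),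
        ← ENNReal.ofReal_add (by positivity) (by positivity),
        ← ENNReal.ofReal_add (by positivity) (by positivity), ← ENNReal.ofReal_one]
      apply ENNReal.ofReal_le_ofReal
      nlinarith [sq_nonneg (1 - 2 * K ω), sq_nonneg (1 - 2 * K (ω - e))]
    rw [setLIntegral_const, one_mul, hVe] at hone
    refine le_trans (le_of_eq ?_) (mul_le_mul_right hone _)
    rw [← ENNReal.ofReal_mul hC.le]
    congr 1
    rw [hCdef]
    field_simp

end VFM

/-- Theorem 4: the minimax interpolation error of the variable fidelity model
`u = ρf + g` with `u` observed on the grid `hℤ^d` and `f` observed on the grid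
`(h/κ)ℤ^d` equals `ρ²(L_f/2)(h/(κπ))² + (L_g/2)(h/π)²`; analytically, the inf
over pairs of kernels `(K̂_f, K̂_g)` of the sup over `F ∈ 𝓕(L_f, 𝟏)` and
`G ∈ 𝓕(L_g, 𝟏)` of `Φ_{hI}(G, K̂_g) + ρ² Φ_{(h/κ)I}(F, K̂_f)`. -/
theorem variable_fidelity_minimax (d : ℕ) (hd : 1 ≤ d) (h : ℝ) (hh : 0 < h)
    (κ : ℕ) (hκ : 0 < κ) (ρ : ℝ) (Lf Lg : ℝ) (hLf : 0 < Lf) (hLg : 0 < Lg) :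
    (⨅ Kf ∈ {K : (Fin d → ℝ) → ℝ | Measurable K},
      ⨅ Kg ∈ {K : (Fin d → ℝ) → ℝ | Measurable K},
        ⨆ F ∈ SpecClass d Lf (fun _ => 1), ⨆ G ∈ SpecClass d Lg (fun _ => 1),
          (Phi d (fun _ => h) G Kg +
            ENNReal.ofReal (ρ ^ 2) * Phi d (fun _ => h / (κ : ℝ)) F Kf))
      = ENNReal.ofReal (ρ ^ 2 * (Lf / 2) * (h / ((κ : ℝ) * π)) ^ 2 +
          (Lg / 2) * (h / π) ^ 2) := by
  have hκ' : (0:ℝ) < κ := by exact_mod_cast hκ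
  have hh2 : 0 < h / (κ : ℝ) := by positivity
  apply le_antisymm
  · refine (iInf₂_le (fun ω => VFM.Kr ((h / (κ : ℝ)) • ω))
      (VFM.measurable_Kr.comp (measurable_const_smul _))).trans ?_
    refine (iInf₂_le (fun ω => VFM.Kr (h • ω))
      (VFM.measurable_Kr.comp (measurable_const_smul _))).trans ?_
    refine iSup₂_le fun F hF => iSup₂_le fun G hG => ?_
    have h1 := VFM.Phi_upper d hd h hh Lg G hG
    have h2 := VFM.Phi_upper d hd (h / (κ : ℝ)) hh2 Lf F hF
    refine (add_le_add h1 (mul_le_mul_right h2 _)).trans (le_of_eq ?_)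
    rw [← ENNReal.ofReal_mul (by positivity), ← ENNReal.ofReal_add (by positivity) (by positivity)]
    congr 1
    field_simp
    ring
  · refine le_iInf₂ fun Kf hKf => le_iInf₂ fun Kg hKg => ?_
    have hlim : ∀ (L a : ℝ), 0 < a → Filter.Tendsto (fun δ : ℝ =>
        L / (2 * (2 * π) ^ 2 * ((1 / (2 * a) + δ) ^ 2 + d * δ ^ 2))) (nhdsWithin 0 (Set.Ioi 0))
        (nhds ((L / 2) * (a / π) ^ 2)) := by
      intro L a ha
      have hc : ContinuousAt (fun δ : ℝ =>
        L / (2 * (2 * π) ^ 2 * ((1 / (2 * a) + δ) ^ 2 + d * δ ^ 2))) 0 := by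
        apply ContinuousAt.div
        · fun_prop
        · fun_prop
        · have : 0 < π := Real.pi_pos
          positivity
      have h2 := hc.tendsto.mono_left (nhdsWithin_le_nhds (s := Set.Ioi 0))
      convert h2 using 2
      have : 0 < π := Real.pi_pos
      simp
      field_simp
    have hT : Filter.Tendsto (fun δ : ℝ => ENNReal.ofReal (ρ ^ 2 *
        (Lf / (2 * (2 * π) ^ 2 * ((1 / (2 * (h / (κ : ℝ))) + δ) ^ 2 + d * δ ^ 2))) +
        Lg / (2 * (2 * π) ^ 2 * ((1 / (2 * h) + δ) ^ 2 + d * δ ^ 2)))) (nhdsWithin 0 (Set.Ioi 0))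
        (nhds (ENNReal.ofReal (ρ ^ 2 * (Lf / 2) * (h / ((κ : ℝ) * π)) ^ 2 +
          (Lg / 2) * (h / π) ^ 2))) := by
      have := ENNReal.tendsto_ofReal (((hlim Lf _ hh2).const_mul (ρ ^ 2)).add (hlim Lg h hh))
      convert this using 3
      rw [div_div]
      ring
    refine le_of_tendsto hT ?_
    filter_upwards [self_mem_nhdsWithin] with δ hδ
    have hδ' : 0 < δ := hδ
    obtain ⟨F, hF, hF2⟩ := VFM.Phi_lower d hd (h / (κ : ℝ)) hh2 Lf hLf δ hδ'
    obtain ⟨G, hG, hG2⟩ := VFM.Phi_lower d hd h hh Lg hLg δ hδ'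
    refine le_trans ?_ (le_iSup₂_of_le F hF (le_iSup₂_of_le G hG le_rfl))
    rw [add_comm, ENNReal.ofReal_add (by positivity) (by positivity),
      ENNReal.ofReal_mul (by positivity)]
    exact add_le_add (hG2 Kg hKg) (mul_le_mul_right (hF2 Kf hKf) _)
end

section
/- Let d ≥ 1, let H = diag(h_1,…,h_d) with all h_i > 0, let F : ℝ^d → [0,∞) be measurable and integrable, and let K̂ : ℝ^d → ℝ be measurable and such that for almost every ω ∈ ℝ^d the series ∑_{k ∈ ℤ^d} K̂(ω + H^{-1}k) converges absolutely and the function (ω, x) ↦ F(ω) |1 − ∑_{k ∈ ℤ^d} K̂(ω + H^{-1}k) e^{2πi (H^{-1}k)·x}|² is integrable on ℝ^d × Ω_H, where Ω_H = [0,h_1] × … × [0,h_d]. Then (1/(h_1⋯h_d)) ∫_{Ω_H} ∫_{ℝ^d} F(ω) |1 − ∑_{k ∈ ℤ^d} K̂(ω + H^{-1}k) e^{2πi (H^{-1}k)·x}|² dω dx = ∫_{ℝ^d} F(ω) [ (1 − K̂(ω))² + ∑_{k ∈ ℤ^d, k ≠ 0} K̂(ω + H^{-1}k)² ] dω. -/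
open MeasureTheory Real

lemma aux_1d (n : ℤ) (a : ℝ) (ha : 0 < a) :
    ∫ x in Set.Icc 0 a, Complex.exp (2 * (π : ℂ) * Complex.I * (((n : ℝ) / a * x : ℝ) : ℂ))
      = if n = 0 then (a : ℂ) else 0 := by
  split_ifs with hn
  · subst hn
    simp [ha.le]
  · rw [integral_Icc_eq_integral_Ioc, ← intervalIntegral.integral_of_le ha.le]
    have ha' : (a : ℂ) ≠ 0 := by exact_mod_cast ha.ne'
    have hn' : (n : ℂ) ≠ 0 := by exact_mod_cast hn
    have hc : 2 * (π : ℂ) * Complex.I * ((n : ℂ) / a) ≠ 0 := by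
      have := Complex.two_pi_I_ne_zero
      positivity
    have := integral_exp_mul_complex (a := 0) (b := a) hc
    calc _ = ∫ x in (0:ℝ)..a, Complex.exp (2 * (π : ℂ) * Complex.I * ((n : ℂ) / a) * x) := by
            congr 1; ext x; push_cast; ring_nf
      _ = 0 := by
        rw [this]
        have e : 2 * (π : ℂ) * Complex.I * ((n : ℂ) / a) * a = n * (2 * π * Complex.I) := by
          field_simp
        rw [e, Complex.exp_int_mul_two_pi_mul_I]
        simp

/-- the character -/
noncomputable def chr {d : ℕ} (h : Fin d → ℝ) (k : Fin d → ℤ) (x : Fin d → ℝ) : ℂ :=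
  Complex.exp (2 * (π : ℂ) * Complex.I * ((∑ i, ((k i : ℝ) / h i) * x i : ℝ) : ℂ))

lemma chr_norm {d : ℕ} (h : Fin d → ℝ) (k : Fin d → ℤ) (x : Fin d → ℝ) : ‖chr h k x‖ = 1 := by
  unfold chr
  rw [Complex.norm_exp]
  simp

lemma chr_zero {d : ℕ} (h : Fin d → ℝ) (x : Fin d → ℝ) : chr h 0 x = 1 := by
  simp [chr]

lemma chr_cont {d : ℕ} (h : Fin d → ℝ) (k : Fin d → ℤ) : Continuous (chr h k) := by
  unfold chr
  fun_prop

lemma chr_mul_conj {d : ℕ} (h : Fin d → ℝ) (k j : Fin d → ℤ) (x : Fin d → ℝ) :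
    chr h k x * (starRingEnd ℂ) (chr h j x) = chr h (k - j) x := by
  unfold chr
  rw [← Complex.exp_conj, ← Complex.exp_add]
  congr 1
  simp only [map_mul, Complex.conj_I, Complex.conj_ofReal, map_ofNat, Pi.sub_apply, Int.cast_sub,
    sub_div, sub_mul, Finset.sum_sub_distrib]
  push_cast
  ring

lemma chr_int {d : ℕ} (h : Fin d → ℝ) (hh : ∀ i, 0 < h i) (k : Fin d → ℤ) :
    ∫ x in Set.pi Set.univ (fun i => Set.Icc 0 (h i)), chr h k x
      = if k = 0 then ((∏ i, h i : ℝ) : ℂ) else 0 := by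
  have e : ∀ x, chr h k x = ∏ i, Complex.exp (2 * (π : ℂ) * Complex.I *
      (((k i : ℝ) / h i * x i : ℝ) : ℂ)) := by
    intro x
    unfold chr
    rw [← Complex.exp_sum, ← Finset.mul_sum]
    push_cast
    rfl
  simp_rw [e]
  rw [volume_pi, Measure.restrict_pi_pi]
  rw [integral_fintype_prod_eq_prod (𝕜 := ℂ)
    (fun i (y : ℝ) => Complex.exp (2 * (π : ℂ) * Complex.I * (((k i : ℝ) / h i * y : ℝ) : ℂ)))]
  simp_rw [fun i => aux_1d (k i) (h i) (hh i)]
  split_ifs with hk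
  · subst hk; simp
  · obtain ⟨i, hi⟩ := Function.ne_iff.mp hk
    exact Finset.prod_eq_zero (Finset.mem_univ i) (if_neg hi)

lemma parseval {d : ℕ} (h : Fin d → ℝ) (hh : ∀ i, 0 < h i) (c : (Fin d → ℤ) → ℂ)
    (hc : Summable fun k => ‖c k‖) :
    ∫ x in Set.pi Set.univ (fun i => Set.Icc 0 (h i)), ‖∑' k, c k * chr h k x‖ ^ 2
      = (∏ i, h i) * ∑' k, ‖c k‖ ^ 2 := by
  have hfin : IsFiniteMeasure ((volume : Measure (Fin d → ℝ)).restrict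
      (Set.pi Set.univ (fun i => Set.Icc 0 (h i)))) :=
    ⟨by
      rw [Measure.restrict_apply_univ]
      exact (isCompact_univ_pi fun i => isCompact_Icc).measure_lt_top⟩
  have hs : ∀ x, Summable fun k => ‖c k * chr h k x‖ := by
    intro x; simpa [chr_norm] using hc
  have hp : Summable fun p : (Fin d → ℤ) × (Fin d → ℤ) => ‖c p.1‖ * ‖c p.2‖ :=
    hc.mul_of_nonneg hc (fun _ => norm_nonneg _) (fun _ => norm_nonneg _)
  have e : ∀ x, ((‖∑' k, c k * chr h k x‖ ^ 2 : ℝ) : ℂ) =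
      ∑' p : (Fin d → ℤ) × (Fin d → ℤ),
        (c p.1 * (starRingEnd ℂ) (c p.2)) * chr h (p.1 - p.2) x := by
    intro x
    push_cast
    rw [← Complex.mul_conj', Complex.conj_tsum, tsum_mul_tsum_of_summable_norm (hs x)]
    · congr 1; ext p
      rw [← chr_mul_conj, map_mul]; ring
    · simpa [chr_norm] using hc
  have hsq : Summable fun k => ‖c k‖ ^ 2 := by
    have := hp.comp_injective (i := fun k => (k, k)) (fun a b hab => (Prod.mk.inj hab).1)
    simpa [Function.comp_def, sq] using this
  apply Complex.ofReal_injective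
  rw [← integral_complex_ofReal]
  simp_rw [e]
  rw [← integral_tsum_of_summable_integral_norm]
  · simp_rw [integral_const_mul, chr_int h hh]
    have hinj : Function.Injective (fun k : Fin d → ℤ => (k, k)) :=
      fun a b hab => (Prod.mk.inj hab).1
    rw [← hinj.tsum_eq]
    · simp only [sub_self, if_true, Complex.mul_conj']
      rw [tsum_mul_right, mul_comm]
      push_cast
      rfl
    · intro p hp
      by_contra hne
      apply hp
      have : p.1 - p.2 ≠ 0 := by
        intro h0
        exact hne ⟨p.1, Prod.ext rfl (sub_eq_zero.mp h0)⟩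
      simp [this]
  · intro p
    refine Integrable.of_bound
      ((continuous_const.mul (chr_cont h _)).aestronglyMeasurable) (‖c p.1‖ * ‖c p.2‖) ?_
    filter_upwards with x
    simp [chr_norm]
  · simp only [norm_mul, chr_norm, RCLike.norm_conj, mul_one, integral_const, smul_eq_mul]
    exact hp.mul_left _

lemma pointwise {d : ℕ} (h : Fin d → ℝ) (hh : ∀ i, 0 < h i) (K : (Fin d → ℝ) → ℝ) (ω : Fin d → ℝ)
    (hω : Summable fun k : Fin d → ℤ => |K (ω + fun i => (k i : ℝ) / h i)|) :
    ∫ x in Set.pi Set.univ (fun i => Set.Icc 0 (h i)),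
      ‖(1 : ℂ) - ∑' k : Fin d → ℤ,
              ((K (ω + fun i => (k i : ℝ) / h i) : ℝ) : ℂ) *
                Complex.exp (2 * (π : ℂ) * Complex.I *
                  ((∑ i, ((k i : ℝ) / h i) * x i : ℝ) : ℂ))‖ ^ 2
     = (∏ i, h i) * ((1 - K ω) ^ 2 +
            ∑' k : {k : Fin d → ℤ // k ≠ 0},
              (K (ω + fun i => (k.1 i : ℝ) / h i)) ^ 2) := by
  set c : (Fin d → ℤ) → ℂ := fun k =>
    (if k = 0 then 1 else 0) - ((K (ω + fun i => (k i : ℝ) / h i) : ℝ) : ℂ) with hc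
  have hK : Summable fun k : Fin d → ℤ => ‖((K (ω + fun i => (k i : ℝ) / h i) : ℝ) : ℂ)‖ := by
    simpa using hω
  have hδ : HasSum (fun k : Fin d → ℤ => if k = 0 then (1 : ℂ) else 0) 1 := hasSum_ite_eq 0 1
  have hδn : Summable (fun k : Fin d → ℤ => ‖if k = 0 then (1 : ℂ) else 0‖) :=
    hδ.summable.norm
  have hcs : Summable fun k => ‖c k‖ :=
    Summable.of_nonneg_of_le (fun _ => norm_nonneg _) (fun k => norm_sub_le _ _) (hδn.add hK)
  have e : ∀ x, (1 : ℂ) - ∑' k : Fin d → ℤ,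
              ((K (ω + fun i => (k i : ℝ) / h i) : ℝ) : ℂ) *
                Complex.exp (2 * (π : ℂ) * Complex.I *
                  ((∑ i, ((k i : ℝ) / h i) * x i : ℝ) : ℂ)) = ∑' k, c k * chr h k x := by
    intro x
    have h1 : Summable fun k : Fin d → ℤ =>
        ((K (ω + fun i => (k i : ℝ) / h i) : ℝ) : ℂ) * chr h k x := by
      apply Summable.of_norm
      simpa [chr_norm] using hω
    have h2 := hδ.sub h1.hasSum
    have h3 : (fun k => c k * chr h k x) = fun k : Fin d → ℤ => (if k = 0 then (1 : ℂ) else 0) -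
        ((K (ω + fun i => (k i : ℝ) / h i) : ℝ) : ℂ) * chr h k x := by
      ext k
      simp only [hc]
      split_ifs with hk
      · subst hk; rw [chr_zero]; ring
      · ring
    rw [h3, h2.tsum_eq]
    rfl
  simp_rw [e]
  rw [parseval h hh c hcs]
  have hsq : Summable fun k => ‖c k‖ ^ 2 := by
    have := (hcs.mul_of_nonneg hcs (fun _ => norm_nonneg _)
      (fun _ => norm_nonneg _)).comp_injective (i := fun k => (k, k))
      (fun a b hab => (Prod.mk.inj hab).1)
    simpa [Function.comp_def, sq] using this
  have hsplit : ∑' k, ‖c k‖ ^ 2 = (1 - K ω) ^ 2 +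
            ∑' k : {k : Fin d → ℤ // k ≠ 0},
              (K (ω + fun i => (k.1 i : ℝ) / h i)) ^ 2 := by
    have hz := hsq.tsum_subtype_add_tsum_subtype_compl ({0} : Set (Fin d → ℤ))
    rw [← hz, tsum_singleton 0 (fun k => ‖c k‖ ^ 2)]
    congr 1
    · have : (ω + fun i => (((0 : Fin d → ℤ) i : ℤ) : ℝ) / h i) = ω := by ext i; simp
      simp only [hc, this, if_true]
      rw [← Complex.ofReal_one, ← Complex.ofReal_sub, Complex.norm_real, Real.norm_eq_abs, sq_abs]
    · refine tsum_congr fun k : {k : Fin d → ℤ // k ≠ 0} => ?_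
      simp only [hc, if_neg k.2]
      simp
  rw [hsplit]

lemma swap_aux {d : ℕ} (S : Set (Fin d → ℝ)) (V : ℝ) (hV : 0 < V)
    (F : (Fin d → ℝ) → ℝ) (G : (Fin d → ℝ) → (Fin d → ℝ) → ℝ) (R : (Fin d → ℝ) → ℝ)
    (hint : IntegrableOn (fun p : (Fin d → ℝ) × (Fin d → ℝ) => F p.1 * G p.1 p.2)
      (Set.univ ×ˢ S))
    (hR : ∀ᵐ ω, ∫ x in S, G ω x = V * R ω) :
    (1 / V) * ∫ x in S, ∫ ω, F ω * G ω x = ∫ ω, F ω * R ω := by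
  have hint' : Integrable (fun p : (Fin d → ℝ) × (Fin d → ℝ) => F p.1 * G p.1 p.2)
      ((volume : Measure (Fin d → ℝ)).prod (volume.restrict S)) := by
    have := hint
    rw [IntegrableOn, Measure.volume_eq_prod, ← Measure.prod_restrict,
      Measure.restrict_univ] at this
    exact this
  rw [← integral_integral_swap (f := fun ω x => F ω * G ω x) hint', ← integral_const_mul]
  apply integral_congr_ae
  filter_upwards [hR] with ω hω
  rw [integral_const_mul, hω]
  field_simp

/-- The Parseval-type identity underlying Theorem 1: with `Ω_H = [0,h₁]×…×[0,h_d]`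
and `H⁻¹k = (k₁/h₁, …, k_d/h_d)`,
`(1/(h₁⋯h_d)) ∫_{Ω_H} ∫_{ℝ^d} F(ω) |1 − ∑_{k∈ℤ^d} K̂(ω + H⁻¹k) e^{2πi(H⁻¹k)·x}|² dω dx
  = ∫_{ℝ^d} F(ω) [(1 − K̂(ω))² + ∑_{k ≠ 0} K̂(ω + H⁻¹k)²] dω`,
using the orthogonality of the characters `x ↦ e^{2πi(H⁻¹k)·x}` on `Ω_H`. -/
theorem parseval_interpolation_identity (d : ℕ) (hd : 1 ≤ d) (h : Fin d → ℝ)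
    (hh : ∀ i, 0 < h i) (F K : (Fin d → ℝ) → ℝ)
    (hFm : Measurable F) (hFi : Integrable F) (hF0 : ∀ ω, 0 ≤ F ω)
    (hKm : Measurable K)
    (habs : ∀ᵐ ω : Fin d → ℝ, Summable fun k : Fin d → ℤ =>
      |K (ω + fun i => (k i : ℝ) / h i)|)
    (hint : IntegrableOn
      (fun p : (Fin d → ℝ) × (Fin d → ℝ) =>
        F p.1 * ‖(1 : ℂ) - ∑' k : Fin d → ℤ,
          ((K (p.1 + fun i => (k i : ℝ) / h i) : ℝ) : ℂ) *
            Complex.exp (2 * (π : ℂ) * Complex.I *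
              ((∑ i, ((k i : ℝ) / h i) * p.2 i : ℝ) : ℂ))‖ ^ 2)
      (Set.univ ×ˢ Set.pi Set.univ fun i => Set.Icc 0 (h i))) :
    (1 / ∏ i, h i) *
        ∫ x in Set.pi Set.univ (fun i => Set.Icc 0 (h i)),
          ∫ ω : Fin d → ℝ,
            F ω * ‖(1 : ℂ) - ∑' k : Fin d → ℤ,
              ((K (ω + fun i => (k i : ℝ) / h i) : ℝ) : ℂ) *
                Complex.exp (2 * (π : ℂ) * Complex.I *
                  ((∑ i, ((k i : ℝ) / h i) * x i : ℝ) : ℂ))‖ ^ 2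
      = ∫ ω : Fin d → ℝ,
          F ω * ((1 - K ω) ^ 2 +
            ∑' k : {k : Fin d → ℤ // k ≠ 0},
              (K (ω + fun i => (k.1 i : ℝ) / h i)) ^ 2) := by
  exact swap_aux _ _ (Finset.prod_pos fun i _ => hh i) F
    (fun ω x => ‖(1 : ℂ) - ∑' k : Fin d → ℤ,
              ((K (ω + fun i => (k i : ℝ) / h i) : ℝ) : ℂ) *
                Complex.exp (2 * (π : ℂ) * Complex.I *
                  ((∑ i, ((k i : ℝ) / h i) * x i : ℝ) : ℂ))‖ ^ 2)
    (fun ω => (1 - K ω) ^ 2 + ∑' k : {k : Fin d → ℤ // k ≠ 0},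
              (K (ω + fun i => (k.1 i : ℝ) / h i)) ^ 2) hint
    (habs.mono fun ω hω => pointwise h hh K ω hω)
end

section
/- Let d ≥ 1, let H = diag(h_1,…,h_d) with all h_i > 0, and let F : ℝ^d → [0,∞) be measurable. Define S̄(ω) = ∑_{k ∈ ℤ^d, k ≠ 0} F(ω + H^{-1}k) (a sum of nonnegative terms, possibly infinite). Then for every measurable K̂ : ℝ^d → ℝ: Φ_H(F, K̂) ≥ ∫_{ℝ^d} F(ω) S̄(ω) / (F(ω) + S̄(ω)) dω (with the convention that the integrand is 0 where F(ω) + S̄(ω) = 0 or S̄(ω) = ∞ is interpreted by taking the integrand equal to F(ω) there), and equality holds for the kernel K̂*(ω) = F(ω) / (F(ω) + S̄(ω)) (set to 0 where the denominator vanishes or is infinite). -/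
open MeasureTheory Real

/-- `S̄(ω) = ∑_{k ∈ ℤ^d, k ≠ 0} F(ω + H⁻¹k)`, a possibly infinite sum of
nonnegative terms. -/
noncomputable def Sbar (d : ℕ) (h : Fin d → ℝ) (F : (Fin d → ℝ) → ℝ)
    (ω : Fin d → ℝ) : ENNReal :=
  ∑' k : {k : Fin d → ℤ // k ≠ 0}, ENNReal.ofReal (F (ω + fun i => (k.1 i : ℝ) / h i))

lemma measurable_Sbar_aux (d : ℕ) (h : Fin d → ℝ) (F : (Fin d → ℝ) → ℝ) (hFm : Measurable F) :
    Measurable (Sbar d h F) := by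
  unfold Sbar
  refine Measurable.ennreal_tsum fun k => ?_
  exact (hFm.comp (measurable_id.add_const _)).ennreal_ofReal

lemma Phi_eq_aux (d : ℕ) (h : Fin d → ℝ) (F K : (Fin d → ℝ) → ℝ)
    (hFm : Measurable F) (hK : Measurable K) :
    Phi d h F K = ∫⁻ ω : Fin d → ℝ, (ENNReal.ofReal (F ω) * ENNReal.ofReal ((1 - K ω) ^ 2) +
      ENNReal.ofReal ((K ω) ^ 2) * Sbar d h F ω) := by
  have m1 : Measurable fun ω => ENNReal.ofReal (F ω) * ENNReal.ofReal ((1 - K ω) ^ 2) := by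
    fun_prop
  have hFo : Measurable fun ω => ENNReal.ofReal (F ω) := hFm.ennreal_ofReal
  have hKo : Measurable fun ω => ENNReal.ofReal (K ω ^ 2) := by fun_prop
  unfold Phi Sbar
  simp_rw [mul_add]
  rw [lintegral_add_left m1, lintegral_add_left m1]
  congr 1
  simp_rw [← ENNReal.tsum_mul_left]
  rw [lintegral_tsum, lintegral_tsum]
  · let e : {k : Fin d → ℤ // k ≠ 0} ≃ {k : Fin d → ℤ // k ≠ 0} :=
      (Equiv.neg (Fin d → ℤ)).subtypeEquiv (fun a => by simp)
    rw [← e.tsum_eq]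
    refine tsum_congr fun k => ?_
    rw [← lintegral_add_right_eq_self _ (fun i => (k.1 i : ℝ) / h i)]
    refine lintegral_congr fun ω => ?_
    have : (ω + (fun i => (k.1 i : ℝ) / h i)) + (fun i => (((e k).1 i : ℤ) : ℝ) / h i) = ω := by
      ext i
      simp [e, neg_div]
    rw [this, mul_comm]
  · intro k
    exact (hKo.mul (hFo.comp (measurable_id.add_const _))).aemeasurable
  · intro k
    exact (hFo.mul (hKo.comp (measurable_id.add_const _))).aemeasurable

lemma pointwise_le_aux (f c : ℝ) (hf : 0 ≤ f) (S : ENNReal) :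
    (if S = ⊤ then ENNReal.ofReal f else ENNReal.ofReal f * S / (ENNReal.ofReal f + S)) ≤
      ENNReal.ofReal f * ENNReal.ofReal ((1 - c) ^ 2) + ENNReal.ofReal (c ^ 2) * S := by
  split_ifs with hS
  · subst hS
    by_cases hc : c = 0
    · simp [hc]
    · have : ENNReal.ofReal (c ^ 2) ≠ 0 := by
        simp only [ne_eq, ENNReal.ofReal_eq_zero, not_le]; positivity
      rw [ENNReal.mul_top this]; simp
  · obtain ⟨s, hs, rfl⟩ : ∃ s : ℝ, 0 ≤ s ∧ S = ENNReal.ofReal s :=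
      ⟨S.toReal, ENNReal.toReal_nonneg, (ENNReal.ofReal_toReal hS).symm⟩
    rcases (add_nonneg hf hs).eq_or_lt with h0 | h0
    · have : f = 0 := by linarith
      simp [this]
    · rw [← ENNReal.ofReal_mul hf, ← ENNReal.ofReal_add hf hs, ← ENNReal.ofReal_div_of_pos h0,
        ← ENNReal.ofReal_mul hf, ← ENNReal.ofReal_mul (sq_nonneg c),
        ← ENNReal.ofReal_add (by positivity) (by positivity)]
      apply ENNReal.ofReal_le_ofReal
      rw [div_le_iff₀ h0]
      nlinarith [sq_nonneg (f * (1 - c) - c * s)]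

lemma pointwise_eq_aux (f c : ℝ) (hf : 0 ≤ f) (S : ENNReal)
    (hc : c = if S = ⊤ then 0 else f / (f + S.toReal)) :
    ENNReal.ofReal f * ENNReal.ofReal ((1 - c) ^ 2) + ENNReal.ofReal (c ^ 2) * S =
    (if S = ⊤ then ENNReal.ofReal f else ENNReal.ofReal f * S / (ENNReal.ofReal f + S)) := by
  split_ifs at hc ⊢ with hS
  · simp [hc]
  · obtain ⟨s, hs, rfl⟩ : ∃ s : ℝ, 0 ≤ s ∧ S = ENNReal.ofReal s :=
      ⟨S.toReal, ENNReal.toReal_nonneg, (ENNReal.ofReal_toReal hS).symm⟩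
    rw [ENNReal.toReal_ofReal hs] at hc
    rcases (add_nonneg hf hs).eq_or_lt with h0 | h0
    · have h1 : f = 0 := by linarith
      have h2 : s = 0 := by linarith
      simp [h1, h2]
    · rw [← ENNReal.ofReal_mul hf, ← ENNReal.ofReal_add hf hs, ← ENNReal.ofReal_mul hf,
        ← ENNReal.ofReal_div_of_pos h0, ← ENNReal.ofReal_mul (sq_nonneg c),
        ← ENNReal.ofReal_add (by positivity) (by positivity)]
      congr 1
      rw [hc]
      field_simp
      ring

/-- Optimality of the kernel `K̂*(ω) = F(ω)/(F(ω) + S̄(ω))` (Theorem 1): every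
measurable kernel `K̂` has interpolation error at least
`∫ F(ω) S̄(ω)/(F(ω) + S̄(ω)) dω` (with integrand `0` where `F + S̄ = 0` and
integrand `F(ω)` where `S̄(ω) = ∞`), and `K̂*` attains this bound. -/
theorem optimal_kernel (d : ℕ) (hd : 1 ≤ d) (h : Fin d → ℝ) (hh : ∀ i, 0 < h i)
    (F : (Fin d → ℝ) → ℝ) (hFm : Measurable F) (hF0 : ∀ ω, 0 ≤ F ω)
    (Kstar : (Fin d → ℝ) → ℝ)
    (hKstar : ∀ ω, Kstar ω =
      if Sbar d h F ω = ⊤ then 0 else F ω / (F ω + (Sbar d h F ω).toReal)) :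
    (∀ K : (Fin d → ℝ) → ℝ, Measurable K →
      (∫⁻ ω : Fin d → ℝ,
          if Sbar d h F ω = ⊤ then ENNReal.ofReal (F ω)
          else ENNReal.ofReal (F ω) * Sbar d h F ω /
            (ENNReal.ofReal (F ω) + Sbar d h F ω))
        ≤ Phi d h F K) ∧
    Phi d h F Kstar
      = ∫⁻ ω : Fin d → ℝ,
          if Sbar d h F ω = ⊤ then ENNReal.ofReal (F ω)
          else ENNReal.ofReal (F ω) * Sbar d h F ω /
            (ENNReal.ofReal (F ω) + Sbar d h F ω) := by
  have hSm := measurable_Sbar_aux d h F hFm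
  have hKm : Measurable Kstar := by
    have : Kstar = fun ω =>
      if Sbar d h F ω = ⊤ then 0 else F ω / (F ω + (Sbar d h F ω).toReal) := funext hKstar
    rw [this]
    exact Measurable.ite (hSm (measurableSet_singleton ⊤)) measurable_const
      (hFm.div (hFm.add hSm.ennreal_toReal))
  refine ⟨fun K hK => ?_, ?_⟩
  · rw [Phi_eq_aux d h F K hFm hK]
    exact lintegral_mono fun ω => pointwise_le_aux _ _ (hF0 ω) _
  · rw [Phi_eq_aux d h F Kstar hFm hKm]
    exact lintegral_congr fun ω => pointwise_eq_aux _ _ (hF0 ω) _ (hKstar ω)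
end

section
/- Let d ≥ 1 be an integer and let L_f, L_g, c, ρ, Λ > 0. Let a* = (c ρ² L_f / L_g)^{d/(d+2)}, let R_2 = ρ² (L_f/2) ((c + a*)/(π Λ a*))^{2/d} + (L_g/2) ((c + a*)/(π Λ))^{2/d}, and let R_1 = (ρ² L_f/2 + L_g/2) (c/(π Λ))^{2/d}. Then R_2 / R_1 = (1 + (L_f^d ρ^{2d} / (L_g^d c²))^{1/(d+2)})^{(d+2)/d} / (1 + ρ² L_f / L_g). -/
open Real

/-- The ratio of the minimax interpolation errors of the variable fidelity and the
single (high) fidelity scenarios under the same budget `Λ`: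
`R₂/R₁ = (1 + (L_f^d ρ^{2d} / (L_g^d c²))^{1/(d+2)})^{(d+2)/d} / (1 + ρ²L_f/L_g)`,
where `a* = (cρ²L_f/L_g)^{d/(d+2)}` is the optimal sample-size ratio. -/
theorem error_ratio_formula (d : ℕ) (hd : 1 ≤ d) (Lf Lg c ρ Λ : ℝ)
    (hLf : 0 < Lf) (hLg : 0 < Lg) (hc : 0 < c) (hρ : 0 < ρ) (hΛ : 0 < Λ)
    (astar R1 R2 : ℝ)
    (hastar : astar = (c * ρ ^ 2 * Lf / Lg) ^ ((d : ℝ) / (d + 2)))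
    (hR2 : R2 = ρ ^ 2 * (Lf / 2) * ((c + astar) / (π * Λ * astar)) ^ ((2 : ℝ) / d) +
        (Lg / 2) * ((c + astar) / (π * Λ)) ^ ((2 : ℝ) / d))
    (hR1 : R1 = (ρ ^ 2 * Lf / 2 + Lg / 2) * (c / (π * Λ)) ^ ((2 : ℝ) / d)) :
    R2 / R1
      = (1 + (Lf ^ d * ρ ^ (2 * d) / (Lg ^ d * c ^ 2)) ^ (1 / ((d : ℝ) + 2)))
          ^ (((d : ℝ) + 2) / d) / (1 + ρ ^ 2 * Lf / Lg) := by
  have hd0 : (0 : ℝ) < d := by exact_mod_cast hd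
  have hX : 0 < c * ρ ^ 2 * Lf / Lg := by positivity
  have ha : 0 < astar := by rw [hastar]; positivity
  have hpi : 0 < π := Real.pi_pos
  -- defining property of the optimal ratio
  have h1 : astar * astar ^ ((2 : ℝ) / d) = c * ρ ^ 2 * Lf / Lg := by
    have e : astar * astar ^ ((2 : ℝ) / d) = astar ^ (1 + (2 : ℝ) / d) := by
      rw [Real.rpow_add ha, Real.rpow_one]
    rw [e, hastar, ← Real.rpow_mul hX.le]
    have : (d : ℝ) / (d + 2) * (1 + 2 / d) = 1 := by field_simp
    rw [this, Real.rpow_one]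
  have h2 : astar ^ (d + 2) = (c * ρ ^ 2 * Lf / Lg) ^ d := by
    have e : (d : ℝ) / (d + 2) * ((d + 2 : ℕ) : ℝ) = (d : ℝ) := by
      push_cast
      field_simp
    rw [hastar, ← Real.rpow_natCast _ (d + 2), ← Real.rpow_mul hX.le, e, Real.rpow_natCast]
  have h3 : (Lf ^ d * ρ ^ (2 * d) / (Lg ^ d * c ^ 2)) ^ (1 / ((d : ℝ) + 2)) = astar / c := by
    have e : Lf ^ d * ρ ^ (2 * d) / (Lg ^ d * c ^ 2) = (astar / c) ^ (d + 2) := by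
      rw [div_pow, h2, div_pow, mul_pow, mul_pow, ← pow_mul, pow_add]
      field_simp
    rw [e, ← Real.rpow_natCast, ← Real.rpow_mul (by positivity)]
    have : ((d + 2 : ℕ) : ℝ) * (1 / ((d : ℝ) + 2)) = 1 := by
      push_cast
      field_simp
    rw [this, Real.rpow_one]
  have ht : 0 < 1 + astar / c := by positivity
  have h4 : (c + astar) / (π * Λ) = c / (π * Λ) * (1 + astar / c) := by
    field_simp
  have h5 : (c + astar) / (π * Λ * astar) = c / (π * Λ) * (1 + astar / c) / astar := by
    field_simp
  have h6 : ((d : ℝ) + 2) / d = 1 + 2 / d := by field_simp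
  rw [h3, h6, Real.rpow_add ht, Real.rpow_one, hR2, hR1, h4, h5,
    Real.div_rpow (by positivity) ha.le, Real.mul_rpow (by positivity) ht.le]
  have hq : 0 < astar ^ ((2 : ℝ) / d) := by positivity
  have hu : 0 < (c / (π * Λ)) ^ ((2 : ℝ) / d) := by positivity
  generalize astar ^ ((2 : ℝ) / d) = q at *
  generalize (c / (π * Λ)) ^ ((2 : ℝ) / d) = u at *
  generalize (1 + astar / c) ^ ((2 : ℝ) / d) = v at *
  have h7 : ρ ^ 2 * Lf = astar * q * Lg / c := by
    rw [h1]; field_simp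
  have h8 : ρ ^ 2 * (Lf / 2) = astar * q * Lg / c / 2 := by
    rw [← h7]; ring
  rw [h8, h7]
  field_simp
  try ring
end
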